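/- For every rooted tree t on a finite type I, the interval consisting of all forests f on I with f ⊑ t, partially ordered by the grafting order ⊑, is a distributive lattice. -/

import Mathlib

/-!
For a forest `t` and a set `R` of vertices, let `t.cut R` be `t` with every edge entering a vertex
of `R` removed; if `R` is finite, its roots are those of `t` together with `R`.  A single grafting
that produces a forest `g` restores one edge, from a root of `g` to a child `m` of that root, so the
forest before the grafting is `g.cut {m}`.  Hence the forests `f ⊑ t` are exactly the forests
`t.cut R`, where `R` is a lower set of `t` consisting of the roots of `t` and finitely many other
vertices, and `R` is recovered as the set of roots of `f`.  Enlarging `S` to `R` one vertex at a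
time, always by a minimal one, shows that `t.cut R ⊑ t.cut S` iff `S ⊆ R`.  So the interval below
`t` is anti-isomorphic to a family of sets that is closed under union and intersection.
-/

/-- A forest on `I`: a partial order in which every principal lower set is a chain. -/
def IsForest {I : Type*} (f : PartialOrder I) : Prop :=
  ∀ v : I, IsChain f.le {u : I | f.le u v}

/-- A rooted tree on `I`: a forest with a least element (the root). -/
def IsRootedTree {I : Type*} (t : PartialOrder I) : Prop :=
  (∃ r : I, ∀ v : I, t.le r v) ∧ IsForest t

/-- `g` is obtained from `f` by a single grafting. -/
def SingleGraft {I : Type*} (f g : PartialOrder I) : Prop :=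
  ∃ r r' : I, r ≠ r' ∧ (∀ y, f.le y r → y = r) ∧ (∀ y, f.le y r' → y = r') ∧
    ∀ x y : I, g.le x y ↔ (f.le x y ∨ (x = r ∧ f.le r' y))

/-- The grafting order: reflexive-transitive closure of single grafting. -/
def GraftLE {I : Type*} (f g : PartialOrder I) : Prop :=
  Relation.ReflTransGen SingleGraft f g

section

variable {I : Type*} {t : PartialOrder I}

/-- The roots of a forest `f`, that is, the minimal elements of the order. -/
def rootSet (f : PartialOrder I) : Set I := {z | ∀ y, f.le y z → y = z}

lemma exists_lt_of_notMem_rootSet {z : I} (hz : z ∉ rootSet t) : ∃ u, u < z := by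
  simpa only [rootSet, Set.mem_ofPred_eq, not_forall, exists_prop, ← lt_iff_le_and_ne] using hz

/-- `m` is a child of a root of `g`, encoded as a minimal vertex among those that are not roots. -/
def IsRootChild (g : PartialOrder I) (m : I) : Prop := Minimal (· ∉ rootSet g) m

namespace IsForest

lemma le_or_le (ht : IsForest t) {a b v : I} (ha : a ≤ v) (hb : b ≤ v) : a ≤ b ∨ b ≤ a :=
  (ht v).total ha hb

lemma subsingleton_rootSet_inter_Iic (ht : IsForest t) (v : I) :
    (rootSet t ∩ Set.Iic v).Subsingleton := by
  rintro a ⟨ha, hav⟩ b ⟨hb, hbv⟩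
  rcases ht.le_or_le hav hbv with hab | hba
  · exact hb a hab
  · exact (ha b hba).symm

/-- The order obtained from the forest `t` by removing every edge that enters a vertex of `R`. It is
defined without reference to edges, since a chain in an infinite forest need not be discrete. -/
abbrev cut (ht : IsForest t) (R : Set I) : PartialOrder I where
  le x y := x ≤ y ∧ ∀ z ∈ Set.Ioc x y, z ∉ R
  lt x y := x < y ∧ ∀ z ∈ Set.Ioc x y, z ∉ R
  le_refl x := ⟨le_rfl, fun _ hz => absurd hz.1 hz.2.not_gt⟩
  le_trans x y z hxy hyz := by
    refine ⟨hxy.1.trans hyz.1, fun w ⟨hxw, hwz⟩ => ?_⟩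
    by_cases hwy : w ≤ y
    · exact hxy.2 w ⟨hxw, hwy⟩
    · exact hyz.2 w ⟨((ht.le_or_le hwz hyz.1).resolve_left hwy).lt_of_not_ge hwy, hwz⟩
  le_antisymm x y hxy hyx := hxy.1.antisymm hyx.1
  lt_iff_le_not_ge x y :=
    ⟨fun hxy => ⟨⟨hxy.1.le, hxy.2⟩, fun hyx => hxy.1.not_ge hyx.1⟩,
      fun ⟨hxy, hyx⟩ => ⟨hxy.1.lt_of_not_ge fun hle => hyx
        ⟨hle, fun _ hz => absurd hz.1 (hz.2.trans hxy.1).not_gt⟩, hxy.2⟩⟩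

lemma isForest_cut (ht : IsForest t) (R : Set I) : IsForest (ht.cut R) := by
  intro v a ha b hb _
  exact (ht.le_or_le ha.1 hb.1).imp
    (fun hab => ⟨hab, fun z hz => ha.2 z ⟨hz.1, hz.2.trans hb.1⟩⟩)
    (fun hba => ⟨hba, fun z hz => hb.2 z ⟨hz.1, hz.2.trans ha.1⟩⟩)

lemma cut_eq_self (ht : IsForest t) {R : Set I} (hR : R ⊆ rootSet t) : ht.cut R = t :=
  PartialOrder.ext fun x _ =>
    ⟨And.left, fun hxy => ⟨hxy, fun _ hz hzR => hz.1.ne (hR hzR x hz.1.le)⟩⟩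

lemma cut_cut (ht : IsForest t) (R S : Set I) :
    (ht.isForest_cut R).cut S = ht.cut (R ∪ S) := by
  refine PartialOrder.ext fun x y => ⟨fun ⟨hxy, hS⟩ => ⟨hxy.1, fun z hz hzRS => ?_⟩,
    fun ⟨hxy, hRS⟩ => ⟨⟨hxy, fun z hz hzR => hRS z hz (.inl hzR)⟩,
      fun z hz hzS => hRS z ⟨hz.1.1, hz.2.1⟩ (.inr hzS)⟩⟩
  have hxz : (ht.cut R).lt x z := ⟨hz.1, fun w hw => hxy.2 w ⟨hw.1, hw.2.trans hz.2⟩⟩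
  have hzy : (ht.cut R).le z y := ⟨hz.2, fun w hw => hxy.2 w ⟨hz.1.trans hw.1, hw.2⟩⟩
  exact hzRS.elim (hxy.2 z hz) (hS z ⟨hxz, hzy⟩)

lemma rootSet_cut (ht : IsForest t) {R : Set I} (hR : ∀ z, (R ∩ Set.Iio z).Finite) :
    rootSet (ht.cut R) = rootSet t ∪ R := by
  refine Set.Subset.antisymm (fun z hz => ?_) ?_
  · by_contra hzRS
    obtain ⟨hz_root, hzR⟩ := not_or.1 hzRS
    -- The edge into `z` survives: let `u` be the last cut vertex before `z`, if there is any.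
    obtain ⟨u, huz, hu⟩ : ∃ u < z, ∀ w ∈ R, u < w → ¬ w < z := by
      rcases (R ∩ Set.Iio z).eq_empty_or_nonempty with hempty | hnonempty
      · obtain ⟨u, huz⟩ := exists_lt_of_notMem_rootSet hz_root
        exact ⟨u, huz, fun w hw _ hwz => hempty.subset ⟨hw, hwz⟩⟩
      · obtain ⟨p, hp⟩ := (hR z).exists_maximal hnonempty
        exact ⟨p, hp.prop.2, fun w hw hpw hwz => hp.not_prop_of_gt hpw ⟨hw, hwz⟩⟩
    exact huz.ne (hz u ⟨huz.le, fun w hw hwR =>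
      hu w hwR hw.1 (hw.2.lt_of_ne fun hwz => hzR (hwz ▸ hwR))⟩)
  · rintro z (hz | hz) y hy
    · exact hz y hy.1
    · exact hy.1.eq_of_not_lt fun hyz => hy.2 z ⟨hyz, le_rfl⟩ hz

end IsForest

namespace SingleGraft

variable {f g : PartialOrder I}

lemma isForest (hf : IsForest f) (h : SingleGraft f g) : IsForest g := by
  obtain ⟨r, r', -, -, hr', hg⟩ := h
  have r_le {v w : I} (hv : f.le r' v) (hw : f.le w v) : g.le r w := by
    rcases hf.le_or_le hv hw with hr'w | hwr'
    · exact (hg _ _).2 (.inr ⟨rfl, hr'w⟩)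
    · exact (hg _ _).2 (.inr ⟨rfl, hr' w hwr' ▸ f.le_refl _⟩)
  intro v a ha b hb hab
  rcases (hg a v).1 ha with hav | ⟨rfl, hv⟩ <;> rcases (hg b v).1 hb with hbv | ⟨rfl, hv'⟩
  · exact (hf.le_or_le hav hbv).imp (fun h => (hg _ _).2 (.inl h)) (fun h => (hg _ _).2 (.inl h))
  · exact .inr (r_le hv' hav)
  · exact .inl (r_le hv hbv)
  · exact absurd rfl hab

lemma exists_eq_cut (hf : IsForest f) (h : SingleGraft f g) :
    ∃ m, IsRootChild g m ∧ f = (h.isForest hf).cut {m} := by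
  obtain ⟨r, r', hne, hr, hr', hg⟩ := h
  have hr_root : r ∈ rootSet g := fun y hy => ((hg y r).1 hy).elim (hr y) And.left
  have hrr' : g.le r r' := (hg _ _).2 (.inr ⟨rfl, f.le_refl _⟩)
  refine ⟨r', ⟨fun hr'_root => hne (hr'_root r hrr'), fun y hy hyr' => ?_⟩,
    PartialOrder.ext fun x y => ⟨fun hxy => ⟨(hg _ _).2 (.inl hxy), ?_⟩, fun ⟨hxy, hcut⟩ => ?_⟩⟩
  · rcases (hg _ _).1 hyr' with hyr' | ⟨rfl, -⟩
    · exact hr' y hyr' ▸ g.le_refl _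
    · exact absurd hr_root hy
  · rintro z ⟨hxz, hzy⟩ rfl
    rcases (hg _ _).1 hxz.le with hxz' | ⟨rfl, -⟩
    · exact hxz.ne (hr' x hxz')
    · have hzy' : f.le z y := ((hg _ _).1 hzy).resolve_right fun h => hne h.1.symm
      exact hne (hf.subsingleton_rootSet_inter_Iic y ⟨hr, hxy⟩ ⟨hr', hzy'⟩)
  · rcases (hg _ _).1 hxy with hxy' | ⟨rfl, hr'y⟩
    · exact hxy'
    · exact absurd rfl (hcut r' ⟨lt_of_le_of_ne hrr' hne, (hg _ _).2 (.inl hr'y)⟩)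

end SingleGraft

lemma IsRootChild.singleGraft_cut (ht : IsForest t) {m : I} (hm : IsRootChild t m) :
    SingleGraft (ht.cut {m}) t := by
  have root_of_lt {x : I} (hx : x < m) : x ∈ rootSet t :=
    not_not.1 (hm.not_prop_of_lt hx)
  obtain ⟨r, hrm⟩ := exists_lt_of_notMem_rootSet hm.prop
  have hr : r ∈ rootSet t := root_of_lt hrm
  refine ⟨r, m, hrm.ne, fun y hy => hr y hy.1,
    fun y hy => hy.1.eq_of_not_lt fun hym => hy.2 m ⟨hym, le_rfl⟩ rfl,
    fun x y => ⟨fun hxy => ?_, ?_⟩⟩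
  · by_cases hm_mem : m ∈ Set.Ioc x y
    · have hxr : x = r := ht.subsingleton_rootSet_inter_Iic m
        ⟨root_of_lt hm_mem.1, hm_mem.1.le⟩ ⟨hr, hrm.le⟩
      exact .inr ⟨hxr, hm_mem.2, fun z hz => hz.1.ne'⟩
    · exact .inl ⟨hxy, fun z hz hzm => hm_mem (hzm ▸ hz)⟩
  · rintro (hxy | ⟨rfl, hmy⟩)
    · exact hxy.1
    · exact hrm.le.trans hmy.1

/-- The sets of roots of the forests in the interval below the forest `t`: lower sets of `t` that
contain its roots and only finitely many other vertices. -/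
def cutSets (t : PartialOrder I) : Sublattice (Set I) where
  carrier := {R | rootSet t ⊆ R ∧ (R \ rootSet t).Finite ∧ IsLowerSet R}
  supClosed' R hR S hS := ⟨hR.1.trans Set.subset_union_left,
    by simpa only [Set.sup_eq_union, Set.union_sdiff_distrib] using hR.2.1.union hS.2.1,
    hR.2.2.union hS.2.2⟩
  infClosed' R hR S hS := ⟨Set.subset_inter hR.1 hS.1,
    hR.2.1.subset (Set.sdiff_subset_sdiff_left Set.inter_subset_left), hR.2.2.inter hS.2.2⟩

lemma rootSet_mem_cutSets (t : PartialOrder I) : rootSet t ∈ cutSets t :=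
  ⟨subset_rfl, by simp only [sdiff_self, Set.bot_eq_empty, Set.finite_empty],
    fun z w hwz hz => (hz w hwz).symm ▸ hz⟩

lemma insert_mem_cutSets {R : Set I} {m : I} (hR : R ∈ cutSets t) (hm : Minimal (· ∉ R) m) :
    insert m R ∈ cutSets t := by
  obtain ⟨hroots, hfin, hlower⟩ := hR
  refine ⟨hroots.trans (Set.subset_insert m R), (hfin.insert m).subset Set.insert_sdiff_subset, ?_⟩
  rintro z w hwz (rfl | hz)
  · exact hwz.eq_or_lt.imp_right fun hwz' => not_not.1 (hm.not_prop_of_lt hwz')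
  · exact .inr (hlower hwz hz)

namespace IsForest

variable {R S : Set I}

lemma rootSet_cut_of_mem_cutSets (ht : IsForest t) (hR : R ∈ cutSets t) :
    rootSet (ht.cut R) = R := by
  obtain ⟨hroots, hfin, -⟩ := hR
  rw [ht.rootSet_cut, Set.union_eq_right.2 hroots]
  intro z
  refine (hfin.union (ht.subsingleton_rootSet_inter_Iic z).finite).subset fun w ⟨hwR, hwz⟩ => ?_
  by_cases hw : w ∈ rootSet t
  · exact .inr ⟨hw, hwz.le⟩
  · exact .inl ⟨hwR, hw⟩

lemma isRootChild_cut_iff (ht : IsForest t) (hR : R ∈ cutSets t) {m : I} :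
    IsRootChild (ht.cut R) m ↔ Minimal (· ∉ R) m := by
  rw [IsRootChild, ht.rootSet_cut_of_mem_cutSets hR]
  refine ⟨fun hm => ⟨hm.1, fun u hu hum => ?_⟩,
    fun hm => ⟨hm.prop, fun u hu hum => ⟨hm.2 hu hum.1, ?_⟩⟩⟩
  · have hcut : (ht.cut R).le u m :=
      ⟨hum, fun z hz hzR => hu (hR.2.2 hz.1.le hzR)⟩
    exact (hm.2 hu hcut).1
  · exact fun z hz => absurd hz.1 (hz.2.trans hum.1).not_gt

lemma graftLE_cut_cut (ht : IsForest t) (hR : R ∈ cutSets t) (hS : S ∈ cutSets t) (hSR : S ⊆ R) :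
    GraftLE (ht.cut R) (ht.cut S) := by
  induction hn : (R \ S).ncard using Nat.strong_induction_on generalizing S with
  | h n ih =>
  have hfin : (R \ S).Finite := hR.2.1.subset (Set.sdiff_subset_sdiff_right hS.1)
  rcases (R \ S).eq_empty_or_nonempty with hempty | hnonempty
  · rw [hSR.antisymm (Set.sdiff_eq_empty.1 hempty)]
    exact .refl
  · obtain ⟨m, hm⟩ := hfin.exists_minimal hnonempty
    have hmS : Minimal (· ∉ S) m :=
      ⟨hm.prop.2, fun u hu hum => hm.2 ⟨hR.2.2 hum hm.prop.1, hu⟩ hum⟩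
    have hlt : (R \ insert m S).ncard < n := hn ▸ Set.ncard_lt_ncard
      ⟨Set.sdiff_subset_sdiff_right (Set.subset_insert m S),
        fun h => (h hm.prop).2 (Set.mem_insert m S)⟩ hfin
    have hgraft : SingleGraft (ht.cut (insert m S)) (ht.cut S) := by
      simpa only [ht.cut_cut, Set.union_singleton] using
        ((ht.isRootChild_cut_iff hS).2 hmS).singleGraft_cut (ht.isForest_cut S)
    exact (ih _ hlt (insert_mem_cutSets hS hmS) (Set.insert_subset hm.prop.1 hSR) rfl).tail hgraft

lemma graftLE_cut (ht : IsForest t) (hR : R ∈ cutSets t) : GraftLE (ht.cut R) t := by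
  simpa only [ht.cut_eq_self subset_rfl] using ht.graftLE_cut_cut hR (rootSet_mem_cutSets t) hR.1

end IsForest

namespace GraftLE

variable {f : PartialOrder I}

lemma isForest (hf : IsForest f) (h : GraftLE f t) : IsForest t := by
  induction h with
  | refl => exact hf
  | tail _ hgraft ih => exact hgraft.isForest ih

lemma exists_eq_cut (hf : IsForest f) (h : GraftLE f t) :
    ∃ R ∈ cutSets t, f = (h.isForest hf).cut R := by
  have ht := h.isForest hf
  change ∃ R ∈ cutSets t, f = ht.cut R
  induction h using Relation.ReflTransGen.head_induction_on with
  | refl => exact ⟨rootSet t, rootSet_mem_cutSets t, (ht.cut_eq_self subset_rfl).symm⟩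
  | head hfg _ ih =>
    obtain ⟨R, hR, rfl⟩ := ih (hfg.isForest hf)
    obtain ⟨m, hm, hf_cut⟩ := hfg.exists_eq_cut hf
    refine ⟨insert m R, insert_mem_cutSets hR ((ht.isRootChild_cut_iff hR).1 hm), ?_⟩
    rw [hf_cut, ht.cut_cut, Set.union_singleton]

lemma rootSet_mem_cutSets (hf : IsForest f) (h : GraftLE f t) : rootSet f ∈ cutSets t := by
  obtain ⟨R, hR, hf_cut⟩ := h.exists_eq_cut hf
  rwa [hf_cut, (h.isForest hf).rootSet_cut_of_mem_cutSets hR]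

lemma cut_rootSet (hf : IsForest f) (h : GraftLE f t) : (h.isForest hf).cut (rootSet f) = f := by
  obtain ⟨R, hR, hf_cut⟩ := h.exists_eq_cut hf
  have hroots : rootSet f = R := by rw [hf_cut, (h.isForest hf).rootSet_cut_of_mem_cutSets hR]
  rw [hroots, ← hf_cut]

end GraftLE

/-- Sending a forest to its set of roots identifies the interval below `t` with `cutSets t`. The
order is reversed because grafting removes roots. -/
def forestEquivCutSets (ht : IsForest t) :
    {f : PartialOrder I // IsForest f ∧ GraftLE f t} ≃ (cutSets t)ᵒᵈ where
  toFun f := .toDual ⟨rootSet f.1, f.2.2.rootSet_mem_cutSets f.2.1⟩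
  invFun R := ⟨ht.cut (R.ofDual : Set I), ht.isForest_cut _, ht.graftLE_cut R.ofDual.2⟩
  left_inv f := Subtype.ext (f.2.2.cut_rootSet f.2.1)
  right_inv R := Subtype.ext (ht.rootSet_cut_of_mem_cutSets R.ofDual.2)

lemma forestEquivCutSets_le_iff (ht : IsForest t)
    {f g : {f : PartialOrder I // IsForest f ∧ GraftLE f t}} :
    forestEquivCutSets ht f ≤ forestEquivCutSets ht g ↔ GraftLE f.1 g.1 := by
  change rootSet g.1 ⊆ rootSet f.1 ↔ _
  refine ⟨fun h => ?_, fun h => (h.rootSet_mem_cutSets f.2.1).1⟩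
  simpa only [f.2.2.cut_rootSet f.2.1, g.2.2.cut_rootSet g.2.1] using
    ht.graftLE_cut_cut (f.2.2.rootSet_mem_cutSets f.2.1) (g.2.2.rootSet_mem_cutSets g.2.1) h

theorem interval_distribLattice_general (ht : IsForest t) :
    ∃ L : DistribLattice {f : PartialOrder I // IsForest f ∧ GraftLE f t},
      ∀ f g : {f : PartialOrder I // IsForest f ∧ GraftLE f t},
        L.toLattice.toSemilatticeSup.toPartialOrder.le f g ↔ GraftLE f.1 g.1 := by
  let X := {f : PartialOrder I // IsForest f ∧ GraftLE f t}
  let e : X ≃ (cutSets t)ᵒᵈ := forestEquivCutSets ht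
  let _ : LE X := ⟨fun f g => GraftLE f.1 g.1⟩
  let _ : LT X := ⟨fun f g => e f < e g⟩
  let _ : Max X := ⟨fun f g => e.symm (e f ⊔ e g)⟩
  let _ : Min X := ⟨fun f g => e.symm (e f ⊓ e g)⟩
  exact ⟨e.injective.distribLattice e (forestEquivCutSets_le_iff ht) Iff.rfl
    (fun _ _ => e.apply_symm_apply _) (fun _ _ => e.apply_symm_apply _), fun _ _ => Iff.rfl⟩

end

/-- For a rooted tree `t`, the interval of forests `f ⊑ t` under the grafting order
is a distributive lattice. -/
theorem interval_distribLattice {I : Type*} [Fintype I]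
    (t : PartialOrder I) (ht : IsRootedTree t) :
    ∃ L : DistribLattice {f : PartialOrder I // IsForest f ∧ GraftLE f t},
      ∀ f g : {f : PartialOrder I // IsForest f ∧ GraftLE f t},
        L.toLattice.toSemilatticeSup.toPartialOrder.le f g ↔ GraftLE f.1 g.1 :=
  interval_distribLattice_general ht.2
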